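/- arXiv:1707.00653 — 2 statements merged into one kernel-verified Lean document; each statement's English description precedes it below -/
import Mathlib

section
/- Let f = x⁶ + y⁴ + z³ − u² + tv and g = x⁷ + z²u + xu² + zt² + v² in ℂ[x, y, z, t, u, v]. Then at every point p ∈ ℂ⁶ with p ≠ 0 and f(p) = g(p) = 0, the 2×6 Jacobian matrix of (f, g) evaluated at p has rank 2. (Hence X_{12,14} : (f = g = 0) ⊂ ℙ(2,3,4,5,6,7) is quasismooth.) -/
open MvPolynomial

/-- `f = x⁶ + y⁴ + z³ − u² + tv` in coordinates
`x = X 0, y = X 1, z = X 2, t = X 3, u = X 4, v = X 5`. -/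
noncomputable def f37 : MvPolynomial (Fin 6) ℂ :=
  X 0 ^ 6 + X 1 ^ 4 + X 2 ^ 3 - X 4 ^ 2 + X 3 * X 5

/-- `g = x⁷ + z²u + xu² + zt² + v²`. -/
noncomputable def g37 : MvPolynomial (Fin 6) ℂ :=
  X 0 ^ 7 + X 2 ^ 2 * X 4 + X 0 * X 4 ^ 2 + X 2 * X 3 ^ 2 + X 5 ^ 2

/-- The critical equations with Lagrange multiplier normalised to `1` have only the zero solution
on `f = 0`. -/
lemma eq_zero_of_critical_one {x z t u v : ℂ}
    (hx : 6 * x ^ 5 = 7 * x ^ 6 + u ^ 2) (hz : 3 * z ^ 2 = 2 * z * u + t ^ 2)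
    (ht : v = 2 * z * t) (hu : -2 * u = z ^ 2 + 2 * x * u) (hv : t = 2 * v)
    (hf : x ^ 6 + z ^ 3 - u ^ 2 + t * v = 0) :
    x = 0 ∧ z = 0 ∧ t = 0 ∧ u = 0 ∧ v = 0 := by
  by_cases t0 : t = 0
  · have v0 : v = 0 := by simp [ht, t0]
    by_cases z0 : z = 0
    · have hux : u * (1 + x) = 0 := by rw [z0] at hu; linear_combination -hu / 2
      rcases mul_eq_zero.mp hux with u0 | hx1
      · have x0 : x ^ 6 = 0 := by simpa [z0, u0, t0] using hf
        exact ⟨pow_eq_zero_iff (by norm_num) |>.mp x0, z0, t0, u0, v0⟩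
      · exfalso
        obtain rfl : x = -1 := by linear_combination hx1
        subst z0 t0
        have : (14 : ℂ) = 0 := by linear_combination hf - hx
        norm_num at this
    · exfalso
      have hzu : 3 * z = 2 * u := mul_left_cancel₀ z0 (by rw [t0] at hz; linear_combination hz)
      obtain rfl : u = 3 / 2 * z := by linear_combination -hzu / 2
      obtain rfl : z = -3 * (1 + x) :=
        mul_left_cancel₀ z0 (by linear_combination -hu)
      have w0 : 1 + x ≠ 0 := by intro h; simp [h] at z0
      subst t0
      have h5 : 2 * x ^ 5 = (63 * (1 + x) + 54) * (1 + x) ^ 2 := by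
        linear_combination hx / 3 + 7 / 3 * hf
      have h6 : 4 * x ^ 6 = (108 * (1 + x) + 81) * (1 + x) ^ 2 := by
        linear_combination 4 * hf
      have hq : 2 * x ^ 2 + 2 * x - 3 = 0 :=
        mul_left_cancel₀ (pow_ne_zero 2 w0) (by linear_combination (h6 - 2 * x * h5) / 63)
      grind
  · exfalso
    have hz4 : z = 1 / 4 := mul_left_cancel₀ t0 (by linear_combination (-hv - 2 * ht) / 4)
    subst hz4 ht
    have h1 : 32 * u * (1 + x) = -1 := by linear_combination -16 * hu
    have h6 : 64 * x ^ 6 = 64 * u ^ 2 + 16 * u - 7 := by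
      linear_combination 64 * hf + 32 * hz
    have h5 : 384 * x ^ 5 = 512 * u ^ 2 + 112 * u - 49 := by
      linear_combination 64 * hx + 7 * h6
    have h5w : 48 * (2 * x) ^ 5 * (1 + x) ^ 2 = 2 - 14 * (1 + x) - 196 * (1 + x) ^ 2 := by
      linear_combination
        4 * (1 + x) ^ 2 * h5 + (2 * (32 * u * (1 + x) - 1) + 14 * (1 + x)) * h1
    have hq : 56 * (1 + x) ^ 3 - 100 * (1 + x) ^ 2 - 8 * (1 + x) + 1 = 0 := by
      have h6w : 16 * (2 * x) ^ 6 * (1 + x) ^ 2 = 1 - 8 * (1 + x) - 112 * (1 + x) ^ 2 := by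
        linear_combination
          16 * (1 + x) ^ 2 * h6 + (32 * u * (1 + x) - 1 + 8 * (1 + x)) * h1
      linear_combination (2 * x * h5w - 3 * h6w) / 7
    clear hx hz hu hv hf h1 h5 h6 t0
    grind

/-- The critical equations with arbitrary Lagrange multiplier have only the zero solution
on `f = 0`. -/
lemma eq_zero_of_critical {x z t u v l : ℂ}
    (hx : 6 * x ^ 5 = l * (7 * x ^ 6 + u ^ 2)) (hz : 3 * z ^ 2 = l * (2 * z * u + t ^ 2))
    (ht : v = l * (2 * z * t)) (hu : -2 * u = l * (z ^ 2 + 2 * x * u)) (hv : t = l * (2 * v))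
    (hf : x ^ 6 + z ^ 3 - u ^ 2 + t * v = 0) :
    x = 0 ∧ z = 0 ∧ t = 0 ∧ u = 0 ∧ v = 0 := by
  obtain ⟨s, rfl⟩ := IsAlgClosed.exists_pow_nat_eq l (n := 2) (by norm_num)
  by_cases hs : s = 0
  · subst hs
    have t0 : t = 0 := by linear_combination hv
    have v0 : v = 0 := by linear_combination ht
    have u0 : u = 0 := by linear_combination -hu / 2
    have x0 : x ^ 5 = 0 := by linear_combination hx / 6
    have z0 : z ^ 2 = 0 := by linear_combination hz / 3
    exact ⟨pow_eq_zero_iff (by norm_num) |>.mp x0, pow_eq_zero_iff (by norm_num) |>.mp z0,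
      t0, u0, v0⟩
  · have key := eq_zero_of_critical_one (x := s ^ 2 * x) (z := s ^ 4 * z) (t := s ^ 5 * t)
      (u := s ^ 6 * u) (v := s ^ 7 * v) (by linear_combination s ^ 10 * hx)
      (by linear_combination s ^ 8 * hz) (by linear_combination s ^ 7 * ht)
      (by linear_combination s ^ 6 * hu) (by linear_combination s ^ 5 * hv)
      (by linear_combination s ^ 12 * hf)
    simpa [hs] using key

/-- The coordinates `x`, `z`, `t`, `u` vanish at every critical point of `g`. -/
lemma eq_zero_of_grad_g_eq_zero {x z t u : ℂ}
    (hx : 7 * x ^ 6 + u ^ 2 = 0) (hz : 2 * z * u + t ^ 2 = 0) (ht : 2 * z * t = 0)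
    (hu : z ^ 2 + 2 * x * u = 0) : x = 0 ∧ z = 0 ∧ t = 0 ∧ u = 0 := by
  have t0 : t = 0 := by
    have : t ^ 3 = 0 := by linear_combination t * hz - u * ht
    exact pow_eq_zero_iff (by norm_num) |>.mp this
  subst t0
  have z0 : z = 0 := by
    have : z ^ 3 = 0 := by linear_combination z * hu - x * hz
    exact pow_eq_zero_iff (by norm_num) |>.mp this
  subst z0
  have x0 : x = 0 := by
    have : x ^ 8 = 0 := by linear_combination x ^ 2 * hx / 7 - x * u / 14 * hu
    exact pow_eq_zero_iff (by norm_num) |>.mp this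
  subst x0
  simpa using hx

/-- At every nonzero point `p ∈ ℂ⁶` with `f(p) = g(p) = 0`, the `2×6` Jacobian
matrix of `(f, g)` has rank 2.  Hence
`X_{12,14} : (f = g = 0) ⊂ ℙ(2,3,4,5,6,7)` is quasismooth. -/
theorem X1214_quasismooth (p : Fin 6 → ℂ) (hp : p ≠ 0)
    (hf : eval p f37 = 0) (hg : eval p g37 = 0) :
    (Matrix.of fun (i : Fin 2) (j : Fin 6) =>
      eval p (pderiv j (![f37, g37] i))).rank = 2 := by
  apply LinearIndependent.rank_matrix
  rw [Fintype.linearIndependent_iff]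
  intro c hc
  have h := fun j => congrFun hc j
  simp only [Fin.sum_univ_two, Matrix.row, Pi.add_apply, Pi.smul_apply, Matrix.of_apply,
    Matrix.cons_val_zero, Matrix.cons_val_one, smul_eq_mul, Pi.zero_apply] at h
  have h0 := h 0
  have h1 := h 1
  have h2 := h 2
  have h3 := h 3
  have h4 := h 4
  have h5 := h 5
  simp only [f37, map_add, map_sub, map_mul, map_pow, eval_X] at hf
  simp [f37, g37, pderiv_X] at h0 h1 h2 h3 h4 h5
  have c0 : c 0 = 0 := by
    by_contra c0
    have y0 : p 1 = 0 := h1.resolve_left c0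
    have hl : c 0 * (c 1 / c 0) = c 1 := mul_div_cancel₀ _ c0
    obtain ⟨x0, z0, t0, u0, v0⟩ := eq_zero_of_critical (x := p 0) (z := p 2) (t := p 3)
      (u := p 4) (v := p 5) (l := -(c 1 / c 0))
      (mul_left_cancel₀ c0 (by linear_combination h0 + (7 * p 0 ^ 6 + p 4 ^ 2) * hl))
      (mul_left_cancel₀ c0 (by linear_combination h2 + (2 * p 2 * p 4 + p 3 ^ 2) * hl))
      (mul_left_cancel₀ c0 (by linear_combination h3 + (2 * p 2 * p 3) * hl))
      (mul_left_cancel₀ c0 (by linear_combination h4 + (p 2 ^ 2 + 2 * p 0 * p 4) * hl))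
      (mul_left_cancel₀ c0 (by linear_combination h5 + (2 * p 5) * hl))
      (by linear_combination hf - p 1 ^ 3 * y0)
    exact hp (funext fun j => by fin_cases j <;> assumption)
  have c1 : c 1 = 0 := by
    by_contra c1
    simp only [c0, zero_mul, zero_add, neg_zero, mul_eq_zero, c1, false_or] at h0 h2 h3 h4 h5
    obtain ⟨x0, z0, t0, u0⟩ := eq_zero_of_grad_g_eq_zero (x := p 0) (z := p 2) (t := p 3)
      (u := p 4) h0 (by linear_combination h2) (by grind) (by linear_combination h4)
    have v0 : p 5 = 0 := by simpa using h5
    have y0 : p 1 = 0 := by simpa [x0, z0, t0, u0] using hf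
    exact hp (funext fun j => by fin_cases j <;> assumption)
  simp [Fin.forall_fin_two, c0, c1]
end

section
/- In ℂ[x, y, z, t, u, v, w, s], consider the nine polynomials: xt − tu − u² + v²; y²t − z²t − xu² + vw; yzt + t³ + tu² − xuv + tw + uw; yzu + t²u + u³ − y²v + z²v + xw; x²u − y²u + z²u − xu² + yzv + t²v + u²v + vw; x²v − xw + ts; −xyz − xt² − xu² − xw − us; −x³ + xy² − xz² + x²u + vs; and x²y² − y⁴ − x²z² + 3y²z² − z⁴ + yzt² − xy²u + xz²u + yzu² + y²uv − z²uv + xtuv + yzw − xuw − tuw + u²w − ws. Then at every point p ∈ ℂ⁸ with p ≠ 0 at which all nine polynomials vanish, the 9×8 Jacobian matrix of these polynomials evaluated at p has rank 4. (Hence the codimension-4 Fano 3-fold X ⊂ ℙ(1⁶,2²) they define is quasismooth.) -/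
open MvPolynomial

/-- Coordinates `x = X 0, y = X 1, z = X 2, t = X 3, u = X 4, v = X 5,
w = X 6, s = X 7` (weights 1, 1, 1, 1, 1, 1, 2, 2).
`q₁ = xt − tu − u² + v²`. -/
noncomputable def q1 : MvPolynomial (Fin 8) ℂ :=
  X 0 * X 3 - X 3 * X 4 - X 4 ^ 2 + X 5 ^ 2

/-- `q₂ = y²t − z²t − xu² + vw`. -/
noncomputable def q2 : MvPolynomial (Fin 8) ℂ :=
  X 1 ^ 2 * X 3 - X 2 ^ 2 * X 3 - X 0 * X 4 ^ 2 + X 5 * X 6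

/-- `q₃ = yzt + t³ + tu² − xuv + tw + uw`. -/
noncomputable def q3 : MvPolynomial (Fin 8) ℂ :=
  X 1 * X 2 * X 3 + X 3 ^ 3 + X 3 * X 4 ^ 2 - X 0 * X 4 * X 5 +
    X 3 * X 6 + X 4 * X 6

/-- `q₄ = yzu + t²u + u³ − y²v + z²v + xw`. -/
noncomputable def q4 : MvPolynomial (Fin 8) ℂ :=
  X 1 * X 2 * X 4 + X 3 ^ 2 * X 4 + X 4 ^ 3 - X 1 ^ 2 * X 5 +
    X 2 ^ 2 * X 5 + X 0 * X 6

/-- `q₅ = x²u − y²u + z²u − xu² + yzv + t²v + u²v + vw`. -/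
noncomputable def q5 : MvPolynomial (Fin 8) ℂ :=
  X 0 ^ 2 * X 4 - X 1 ^ 2 * X 4 + X 2 ^ 2 * X 4 - X 0 * X 4 ^ 2 +
    X 1 * X 2 * X 5 + X 3 ^ 2 * X 5 + X 4 ^ 2 * X 5 + X 5 * X 6

/-- `q₆ = x²v − xw + ts`. -/
noncomputable def q6 : MvPolynomial (Fin 8) ℂ :=
  X 0 ^ 2 * X 5 - X 0 * X 6 + X 3 * X 7

/-- `q₇ = −xyz − xt² − xu² − xw − us`. -/
noncomputable def q7 : MvPolynomial (Fin 8) ℂ :=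
  -(X 0 * X 1 * X 2) - X 0 * X 3 ^ 2 - X 0 * X 4 ^ 2 - X 0 * X 6 -
    X 4 * X 7

/-- `q₈ = −x³ + xy² − xz² + x²u + vs`. -/
noncomputable def q8 : MvPolynomial (Fin 8) ℂ :=
  -(X 0 ^ 3) + X 0 * X 1 ^ 2 - X 0 * X 2 ^ 2 + X 0 ^ 2 * X 4 + X 5 * X 7

/-- `q₉ = x²y² − y⁴ − x²z² + 3y²z² − z⁴ + yzt² − xy²u + xz²u + yzu² + y²uv
− z²uv + xtuv + yzw − xuw − tuw + u²w − ws`. -/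
noncomputable def q9 : MvPolynomial (Fin 8) ℂ :=
  X 0 ^ 2 * X 1 ^ 2 - X 1 ^ 4 - X 0 ^ 2 * X 2 ^ 2 + 3 * X 1 ^ 2 * X 2 ^ 2 -
    X 2 ^ 4 + X 1 * X 2 * X 3 ^ 2 - X 0 * X 1 ^ 2 * X 4 +
    X 0 * X 2 ^ 2 * X 4 + X 1 * X 2 * X 4 ^ 2 + X 1 ^ 2 * X 4 * X 5 -
    X 2 ^ 2 * X 4 * X 5 + X 0 * X 3 * X 4 * X 5 + X 1 * X 2 * X 6 -
    X 0 * X 4 * X 6 - X 3 * X 4 * X 6 + X 4 ^ 2 * X 6 - X 6 * X 7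

/-- The nine unprojection equations of the codimension-4 Fano 3-fold
`X ⊂ ℙ(1⁶,2²)` (Hilbert series 24097, Jer₁₂ unprojection). -/
noncomputable def eqns24097 : Fin 9 → MvPolynomial (Fin 8) ℂ :=
  ![q1, q2, q3, q4, q5, q6, q7, q8, q9]


section Derivation

variable (p : Fin 8 → ℂ)

/-- The gradient of a polynomial at the point `p`. -/
noncomputable def gradAt : MvPolynomial (Fin 8) ℂ →ₗ[ℂ] Fin 8 → ℂ :=
  LinearMap.pi fun j => (aeval p).toLinearMap ∘ₗ (pderiv j).toLinearMap

lemma gradAt_apply (f : MvPolynomial (Fin 8) ℂ) (j : Fin 8) :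
    gradAt p f j = eval p (pderiv j f) := by
  simp [gradAt]

lemma gradAt_mul (f g : MvPolynomial (Fin 8) ℂ) :
    gradAt p (f * g) = eval p f • gradAt p g + eval p g • gradAt p f := by
  ext j
  simp [gradAt_apply, Derivation.leibniz]

lemma gradAt_q1 : gradAt p q1 =
    ![p 3, 0, 0, p 0 - p 4, -p 3 - 2 * p 4, 2 * p 5, 0, 0] := by
  ext j
  fin_cases j <;> simp [gradAt_apply, q1, pderiv_X]

lemma gradAt_q2 : gradAt p q2 =
    ![-p 4 ^ 2, 2 * p 1 * p 3, -2 * p 2 * p 3, p 1 ^ 2 - p 2 ^ 2, -2 * p 0 * p 4, p 6, p 5, 0] := by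
  ext j
  fin_cases j <;> simp [gradAt_apply, q2, pderiv_X] <;> ring

lemma gradAt_q3 : gradAt p q3 =
    ![-p 4 * p 5, p 2 * p 3, p 1 * p 3, p 1 * p 2 + 3 * p 3 ^ 2 + p 4 ^ 2 + p 6,
      2 * p 3 * p 4 - p 0 * p 5 + p 6, -p 0 * p 4, p 3 + p 4, 0] := by
  ext j
  fin_cases j <;> simp [gradAt_apply, q3, pderiv_X] <;> ring

lemma gradAt_q4 : gradAt p q4 =
    ![p 6, p 2 * p 4 - 2 * p 1 * p 5, p 1 * p 4 + 2 * p 2 * p 5, 2 * p 3 * p 4,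
      p 1 * p 2 + p 3 ^ 2 + 3 * p 4 ^ 2, p 2 ^ 2 - p 1 ^ 2, p 0, 0] := by
  ext j
  fin_cases j <;> simp [gradAt_apply, q4, pderiv_X] <;> ring

lemma gradAt_q5 : gradAt p q5 =
    ![2 * p 0 * p 4 - p 4 ^ 2, p 2 * p 5 - 2 * p 1 * p 4, p 1 * p 5 + 2 * p 2 * p 4,
      2 * p 3 * p 5, p 0 ^ 2 - p 1 ^ 2 + p 2 ^ 2 - 2 * p 0 * p 4 + 2 * p 4 * p 5,
      p 1 * p 2 + p 3 ^ 2 + p 4 ^ 2 + p 6, p 5, 0] := by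
  ext j
  fin_cases j <;> simp [gradAt_apply, q5, pderiv_X] <;> ring

lemma gradAt_q6 : gradAt p q6 =
    ![2 * p 0 * p 5 - p 6, 0, 0, p 7, 0, p 0 ^ 2, -p 0, p 3] := by
  ext j
  fin_cases j <;> simp [gradAt_apply, q6, pderiv_X] <;> ring

lemma gradAt_q7 : gradAt p q7 =
    ![-(p 1 * p 2) - p 3 ^ 2 - p 4 ^ 2 - p 6, -(p 0 * p 2), -(p 0 * p 1), -2 * p 0 * p 3,
      -2 * p 0 * p 4 - p 7, 0, -p 0, -p 4] := by
  ext j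
  fin_cases j <;> simp [gradAt_apply, q7, pderiv_X] <;> ring

lemma gradAt_q8 : gradAt p q8 =
    ![-3 * p 0 ^ 2 + p 1 ^ 2 - p 2 ^ 2 + 2 * p 0 * p 4, 2 * p 0 * p 1, -2 * p 0 * p 2, 0,
      p 0 ^ 2, p 7, 0, p 5] := by
  ext j
  fin_cases j <;> simp [gradAt_apply, q8, pderiv_X] <;> ring

lemma gradAt_q9 : gradAt p q9 =
    ![2 * p 0 * p 1 ^ 2 - 2 * p 0 * p 2 ^ 2 - p 1 ^ 2 * p 4 + p 2 ^ 2 * p 4 + p 3 * p 4 * p 5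
        - p 4 * p 6,
      2 * p 0 ^ 2 * p 1 - 4 * p 1 ^ 3 + 6 * p 1 * p 2 ^ 2 + p 2 * p 3 ^ 2 - 2 * p 0 * p 1 * p 4
        + p 2 * p 4 ^ 2 + 2 * p 1 * p 4 * p 5 + p 2 * p 6,
      -2 * p 0 ^ 2 * p 2 + 6 * p 1 ^ 2 * p 2 - 4 * p 2 ^ 3 + p 1 * p 3 ^ 2 + 2 * p 0 * p 2 * p 4
        + p 1 * p 4 ^ 2 - 2 * p 2 * p 4 * p 5 + p 1 * p 6,
      2 * p 1 * p 2 * p 3 + p 0 * p 4 * p 5 - p 4 * p 6,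
      -(p 0 * p 1 ^ 2) + p 0 * p 2 ^ 2 + 2 * p 1 * p 2 * p 4 + p 1 ^ 2 * p 5 - p 2 ^ 2 * p 5
        + p 0 * p 3 * p 5 - p 0 * p 6 - p 3 * p 6 + 2 * p 4 * p 6,
      p 1 ^ 2 * p 4 - p 2 ^ 2 * p 4 + p 0 * p 3 * p 4,
      p 1 * p 2 - p 0 * p 4 - p 3 * p 4 + p 4 ^ 2 - p 7,
      -p 6] := by
  ext j
  have h3 : pderiv j (3 : MvPolynomial (Fin 8) ℂ) = 0 := (pderiv j).map_natCast 3
  fin_cases j <;> simp at h3 <;> simp [gradAt_apply, q9, pderiv_X, h3] <;> ring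

end Derivation

lemma rank_eq_four_of_basis {r : Matrix (Fin 9) (Fin 8) ℂ} {b : Fin 4 → Fin 8 → ℂ}
    (hb : LinearIndependent ℂ b) (hbr : ∀ i, b i ∈ Submodule.span ℂ (Set.range r))
    (hrb : ∀ i, r i ∈ Submodule.span ℂ (Set.range b)) : r.rank = 4 := by
  have hspan : Submodule.span ℂ (Set.range r.row) = Submodule.span ℂ (Set.range b) :=
    le_antisymm (Submodule.span_le.2 (Set.range_subset_iff.2 hrb))
      (Submodule.span_le.2 (Set.range_subset_iff.2 hbr))
  rw [Matrix.rank_eq_finrank_span_row, hspan, finrank_span_eq_card hb, Fintype.card_fin]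

/-- A critical point of the pencil spanned by `q₁` and `q₅ - q₂` with `y = z = 0`, in the chart
`t = 1`. -/
lemma no_critical_axis_chart {x u v l : ℂ} (h1 : 2 * x * u = l) (h2 : 2 * v = l * (x - u))
    (h3 : x ^ 2 + 2 * u * v = -l * (1 + 2 * u)) (h4 : 1 + u ^ 2 = 2 * l * v)
    (h5 : x - u - u ^ 2 + v ^ 2 = 0) : False := by
  subst h1
  have hv : v = x * u * (x - u) := by linear_combination h2 / 2
  subst hv
  have hx : x ≠ 0 := by
    rintro rfl
    have hu : u * (1 + u) = 0 := by linear_combination -h5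
    have hu' : 1 + u ^ 2 = 0 := by linear_combination h4
    rcases mul_eq_zero.1 hu with rfl | hu
    · norm_num at hu'
    · have : (2 : ℂ) = 0 := by linear_combination hu' + (1 - u) * hu
      norm_num at this
  have hx3 : x * (1 + 2 * u ^ 2) = 2 * u * (u ^ 2 - 2 * u - 1) :=
    mul_left_cancel₀ hx (by linear_combination h3)
  have hu : u ≠ 0 := by
    rintro rfl
    norm_num at h4
  have hd : 1 + 2 * u ^ 2 ≠ 0 := by
    intro hd
    have hu3 : u * (4 * u + 3) = 0 := by linear_combination u * hd + hx3 - x * hd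
    have hu4 : u = -3 / 4 := by
      linear_combination (mul_eq_zero.1 hu3).resolve_left hu / 4
    rw [hu4] at hd
    norm_num at hd
  have hT : (1 + u ^ 2) * (1 + 2 * u ^ 2) ^ 3
      + 16 * u ^ 5 * (u ^ 2 - 2 * u - 1) ^ 2 * (3 + 4 * u) = 0 := by
    have hxu : (x - u) * (1 + 2 * u ^ 2) = -u * (4 * u + 3) := by linear_combination hx3
    have e : (1 + u ^ 2) * (1 + 2 * u ^ 2) ^ 3 =
        4 * u ^ 2 * (x * (1 + 2 * u ^ 2)) ^ 2 * ((x - u) * (1 + 2 * u ^ 2)) := by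
      linear_combination (1 + 2 * u ^ 2) ^ 3 * h4
    rw [hxu, hx3] at e
    linear_combination e
  have hK : 4 * u ^ 3 + u ^ 2 + 8 * u + 5 = 0 := by
    have h6 : 4 * (x - u - u ^ 2) + (1 + u ^ 2) * (x - u) = 0 := by
      linear_combination 4 * h5 + (x - u) * h4
    have h7 : u * (4 * u ^ 3 + u ^ 2 + 8 * u + 5) = 0 := by
      linear_combination (-(1 + 2 * u ^ 2) * h6 + (5 + u ^ 2) * hx3) / 3
    exact (mul_eq_zero.1 h7).resolve_left hu
  have : (1 : ℂ) = 0 := by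
    linear_combination
      ((10226137773 / 73986517768) - (1508823357 / 73986517768) * u
        + (1170967039 / 18496629442) * u ^ 2) * hT
      + ((12752075999 / 73986517768) - (20101556927 / 73986517768) * u
        + (7179354685 / 36993258884) * u ^ 2 - (13521465853 / 36993258884) * u ^ 3
        + (3276670749 / 18496629442) * u ^ 4 - (29947058121 / 18496629442) * u ^ 5
        - (44523230683 / 9248314721) * u ^ 6 - (42486389 / 32001089) * u ^ 7
        + (35804723806 / 9248314721) * u ^ 8 - (9367736312 / 9248314721) * u ^ 9) * hK
  exact one_ne_zero this

/-- The pencil spanned by `q₁` and `q₅ - q₂` has no critical point with `y = z = 0` outside the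
plane `t = u = v = 0`. -/
lemma no_critical_axis {x t u v l : ℂ} (h1 : 2 * x * u = l * t) (h2 : 2 * t * v = l * (x - u))
    (h3 : x ^ 2 + 2 * u * v = -l * (t + 2 * u)) (h4 : t ^ 2 + u ^ 2 = 2 * l * v)
    (h5 : x * t - t * u - u ^ 2 + v ^ 2 = 0) (hD : ¬(t = 0 ∧ u = 0 ∧ v = 0)) : False := by
  by_cases ht : t = 0
  · subst ht
    by_cases hu : u = 0
    · subst hu
      exact hD ⟨rfl, rfl, by simpa using h5⟩
    · have hx : x = 0 := by
        have : x * u = 0 := by linear_combination h1 / 2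
        exact (mul_eq_zero.1 this).resolve_right hu
      subst hx
      have hv : v = -l := mul_left_cancel₀ hu (by linear_combination h3 / 2)
      subst hv
      have : u ^ 2 = 0 := by linear_combination (h4 - 2 * h5) / 3
      exact hu (pow_eq_zero_iff two_ne_zero |>.1 this)
  · refine no_critical_axis_chart (x := x / t) (u := u / t) (v := v / t) (l := l / t) ?_ ?_ ?_ ?_ ?_
    · field_simp; linear_combination h1
    · field_simp; linear_combination h2
    · field_simp; linear_combination h3
    · field_simp; linear_combination h4
    · field_simp; linear_combination h5

/-- A critical point of the pencil spanned by `q₁` and `q₅ - q₂` with `v = 2ι(t + u)`, `y = ιz`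
and `ζ = z²`, in the chart `t = 1`. -/
lemma no_critical_diagonal_chart {ι x u ζ l : ℂ} (hι : ι ^ 2 = -1) (h1 : 2 * x * u = l)
    (h2 : 4 * ι * (1 + u) + 2 * ζ = l * (x - u))
    (h3 : x ^ 2 + 2 * ζ + 4 * ι * u * (1 + u) = -l * (1 + 2 * u))
    (h4 : ι * ζ + 1 + u ^ 2 = 4 * ι * l * (1 + u))
    (h5 : x - u - u ^ 2 - 4 * (1 + u) ^ 2 = 0) (hu : 1 + u ≠ 0) : False := by
  subst h1
  have hx : x = (5 * u + 4) * (u + 1) := by linear_combination h5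
  subst hx
  have hζ : ζ = 4 * (2 * ((5 * u + 4) * (u + 1)) * u) * (1 + u) + ι * (1 + u ^ 2) := by
    linear_combination -ι * h4 + (ζ - 4 * (2 * ((5 * u + 4) * (u + 1)) * u) * (1 + u)) * hι
  subst hζ
  have hf : (4 * ι - 16) - (96 + 4 * ι) * u - 195 * u ^ 2 - 165 * u ^ 3 - 50 * u ^ 4 = 0 :=
    mul_left_cancel₀ hu (by linear_combination h2 - h3)
  have hg : 6 * ι + (32 + 4 * ι) * u + (72 + 2 * ι) * u ^ 2 - 90 * u ^ 4 - 50 * u ^ 5 = 0 := by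
    linear_combination h2
  have : (1 : ℂ) = 0 := by
    linear_combination
      ((-24383611457 / 622494748138 - 20079792938 / 311247374069 * ι)
        + (-319944826163 / 1867484244414 + 118775468806 / 933742122207 * ι) * u
        + (-68948726440 / 933742122207 + 19659550575 / 311247374069 * ι) * u ^ 2
        + (186699299180 / 933742122207 - 102185590850 / 933742122207 * ι) * u ^ 3
        + (46463687450 / 311247374069 - 46343338625 / 622494748138 * ι) * u ^ 4) * hf
      + ((-136254732047 / 933742122207 - 35859310661 / 1867484244414 * ι)
        + (-378369497150 / 933742122207 + 59239248025 / 311247374069 * ι) * u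
        + (-3918672205 / 9244971507 + 8176558525 / 36979886028 * ι) * u ^ 2
        + (-46463687450 / 311247374069 + 46343338625 / 622494748138 * ι) * u ^ 3) * hg
      + (116178482413 / 311247374069 - 570215744536 / 311247374069 * u - 1116382009235 / 622494748138 * u ^ 2 - 317900325500 / 311247374069 * u ^ 3 - 547772379275 / 622494748138 * u ^ 4 - 139030015875 / 311247374069 * u ^ 5) * hι
  exact one_ne_zero this

/-- The pencil spanned by `q₁` and `q₅ - q₂` has no critical point with `v = 2ι(t + u) ≠ 0`,
`y = ιz` and `ζ = z²`. -/
lemma no_critical_diagonal {ι x t u ζ l : ℂ} (hι : ι ^ 2 = -1) (h1 : 2 * x * u = l * t)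
    (h2 : 4 * ι * t * (t + u) + 2 * ζ = l * (x - u))
    (h3 : x ^ 2 + 2 * ζ + 4 * ι * u * (t + u) = -l * (t + 2 * u))
    (h4 : ι * ζ + t ^ 2 + u ^ 2 = 4 * ι * l * (t + u))
    (h5 : x * t - t * u - u ^ 2 - 4 * (t + u) ^ 2 = 0) (ha : t + u ≠ 0) : False := by
  have ht : t ≠ 0 := by
    rintro rfl
    have : u ^ 2 = 0 := by linear_combination -h5 / 5
    exact ha (by rw [pow_eq_zero_iff two_ne_zero |>.1 this, add_zero])
  refine no_critical_diagonal_chart (x := x / t) (u := u / t) (ζ := ζ / t ^ 2) (l := l / t)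
    hι ?_ ?_ ?_ ?_ ?_ ?_
  · field_simp; linear_combination h1
  · field_simp; linear_combination h2
  · field_simp; linear_combination h3
  · field_simp; linear_combination h4
  · field_simp; linear_combination h5
  · field_simp; exact div_ne_zero ha ht

/-- The complete intersection `q₁ = q₅ - q₂ = 0` is nonsingular outside the planes
`t = u = v = 0` and `x = v = t + u = 0`. -/
lemma no_critical {x y z t u v l : ℂ} (hx : 2 * x * u = l * t)
    (hy : z * v = 2 * y * (t + u)) (hz : y * v = -2 * z * (t + u))
    (ht : 2 * t * v - y ^ 2 + z ^ 2 = l * (x - u))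
    (hu : x ^ 2 - y ^ 2 + z ^ 2 + 2 * u * v = -l * (t + 2 * u))
    (hv : y * z + t ^ 2 + u ^ 2 = 2 * l * v) (h5 : x * t - t * u - u ^ 2 + v ^ 2 = 0)
    (hD : ¬(t = 0 ∧ u = 0 ∧ v = 0)) (hE : ¬(x = 0 ∧ v = 0 ∧ t + u = 0)) : False := by
  by_cases hyz : y = 0 ∧ z = 0
  · obtain ⟨rfl, rfl⟩ := hyz
    exact no_critical_axis hx (by linear_combination ht) (by linear_combination hu)
      (by linear_combination hv) h5 hD
  have hva : v ^ 2 = -4 * (t + u) ^ 2 := by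
    by_cases hy0 : y = 0
    · refine mul_left_cancel₀ (fun hz0 => hyz ⟨hy0, hz0⟩ : z ≠ 0) ?_
      linear_combination v * hy + 2 * (t + u) * hz
    · refine mul_left_cancel₀ hy0 ?_
      linear_combination v * hz - 2 * (t + u) * hy
  by_cases ha : t + u = 0
  · have hv0 : v = 0 := by simpa [ha] using hva
    have hxt : x * t = 0 := by linear_combination h5 - v * hv0 + u * ha
    rcases mul_eq_zero.1 hxt with h0 | h0
    · exact hE ⟨h0, hv0, ha⟩
    · exact hD ⟨h0, by simpa [h0] using ha, hv0⟩
  · obtain ⟨ι, hιv⟩ : ∃ ι, v = 2 * ι * (t + u) := ⟨v / (2 * (t + u)), by field_simp⟩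
    subst hιv
    have hι : ι ^ 2 = -1 :=
      mul_left_cancel₀ (pow_ne_zero 2 ha) (by linear_combination hva / 4)
    have hyι : y = ι * z := mul_left_cancel₀ ha (by linear_combination -hy / 2)
    subst hyι
    exact no_critical_diagonal (ζ := z ^ 2) hι hx (by linear_combination ht + z ^ 2 * hι)
      (by linear_combination hu + z ^ 2 * hι) (by linear_combination hv)
      (by linear_combination h5 - 4 * (t + u) ^ 2 * hι) ha

/-- The polynomials vanishing at `p` whose gradient at `p` lies in the subspace `S`. -/
noncomputable def gradIdeal (p : Fin 8 → ℂ) (S : Submodule ℂ (Fin 8 → ℂ)) :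
    Ideal (MvPolynomial (Fin 8) ℂ) where
  carrier := {f | eval p f = 0 ∧ gradAt p f ∈ S}
  zero_mem' := by simp
  add_mem' := fun hf hg => ⟨by simp [hf.1, hg.1], by simpa using S.add_mem hf.2 hg.2⟩
  smul_mem' := fun a f hf => ⟨by simp [hf.1], by
    simpa [gradAt_mul, hf.1] using S.smul_mem _ hf.2⟩

section GradIdeal

variable {p : Fin 8 → ℂ} {S : Submodule ℂ (Fin 8 → ℂ)}

lemma mem_gradIdeal_of_mul_mem {a f : MvPolynomial (Fin 8) ℂ} (ha : eval p a ≠ 0)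
    (hf : eval p f = 0) (h : a * f ∈ gradIdeal p S) : f ∈ gradIdeal p S := by
  have h' := h.2
  rw [gradAt_mul, hf, zero_smul, add_zero] at h'
  exact ⟨hf, (S.smul_mem_iff ha).1 h'⟩

/-- If a linear combination of gradients with coefficients in `ℂ` equals a nonzero multiple of the
gradient of `f`, then `f` lies in the ideal. -/
lemma mem_gradIdeal_of_smul_eq {f : MvPolynomial (Fin 8) ℂ} {a : ℂ} {v : Fin 8 → ℂ} (ha : a ≠ 0)
    (hf : eval p f = 0) (hv : v ∈ S) (h : a • gradAt p f = v) : f ∈ gradIdeal p S :=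
  ⟨hf, (S.smul_mem_iff ha).1 (h ▸ hv)⟩

lemma pfaffians_mem_of_q4_mem (h : ∀ i, eval p (eqns24097 i) = 0)
    (hx : p 0 ≠ 0) (h1 : q1 ∈ gradIdeal p S)
    (hc : q5 - q2 ∈ gradIdeal p S) (h4 : q4 ∈ gradIdeal p S) :
    q3 ∈ gradIdeal p S ∧ q5 ∈ gradIdeal p S := by
  constructor
  · refine mem_gradIdeal_of_mul_mem (a := X 0) (by simpa) (h 2) ?_
    rw [show X 0 * q3 = (X 3 + X 4) * q4 + (X 1 * X 2 + X 3 ^ 2 + X 4 ^ 2) * q1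
      + (-X 5) * (q5 - q2) by simp only [q1, q2, q3, q4, q5]; ring]
    exact add_mem (add_mem (Ideal.mul_mem_left _ _ h4) (Ideal.mul_mem_left _ _ h1))
      (Ideal.mul_mem_left _ _ hc)
  · refine mem_gradIdeal_of_mul_mem (a := X 0) (by simpa) (h 4) ?_
    rw [show X 0 * q5 = X 5 * q4 + (X 1 ^ 2 - X 2 ^ 2) * q1 + (X 0 - X 4) * (q5 - q2) by
      simp only [q1, q2, q4, q5]; ring]
    exact add_mem (add_mem (Ideal.mul_mem_left _ _ h4) (Ideal.mul_mem_left _ _ h1))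
      (Ideal.mul_mem_left _ _ hc)

lemma pfaffians_mem_of_q5_mem (h : ∀ i, eval p (eqns24097 i) = 0)
    (hv : p 5 ≠ 0) (h1 : q1 ∈ gradIdeal p S)
    (hc : q5 - q2 ∈ gradIdeal p S) (h5 : q5 ∈ gradIdeal p S) :
    q3 ∈ gradIdeal p S ∧ q4 ∈ gradIdeal p S := by
  constructor
  · refine mem_gradIdeal_of_mul_mem (a := X 5) (by simpa) (h 2) ?_
    rw [show X 5 * q3 = (X 3 + X 4) * q5 + (-(X 0 * X 4)) * q1 + (-X 4) * (q5 - q2) by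
      simp only [q1, q2, q3, q5]; ring]
    exact add_mem (add_mem (Ideal.mul_mem_left _ _ h5) (Ideal.mul_mem_left _ _ h1))
      (Ideal.mul_mem_left _ _ hc)
  · refine mem_gradIdeal_of_mul_mem (a := X 5) (by simpa) (h 3) ?_
    rw [show X 5 * q4 = X 0 * q5 + (-(X 1 ^ 2 - X 2 ^ 2)) * q1 + (-(X 0 - X 4)) * (q5 - q2) by
      simp only [q1, q2, q4, q5]; ring]
    exact add_mem (add_mem (Ideal.mul_mem_left _ _ h5) (Ideal.mul_mem_left _ _ h1))
      (Ideal.mul_mem_left _ _ hc)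

lemma pfaffians_mem_of_q3_mem (h : ∀ i, eval p (eqns24097 i) = 0)
    (htu : p 3 + p 4 ≠ 0) (h1 : q1 ∈ gradIdeal p S)
    (hc : q5 - q2 ∈ gradIdeal p S) (h3 : q3 ∈ gradIdeal p S) :
    q4 ∈ gradIdeal p S ∧ q5 ∈ gradIdeal p S := by
  constructor
  · refine mem_gradIdeal_of_mul_mem (a := X 3 + X 4) (by simpa) (h 3) ?_
    rw [show (X 3 + X 4) * q4 = X 0 * q3 + (-(X 1 * X 2 + X 3 ^ 2 + X 4 ^ 2)) * q1
      + X 5 * (q5 - q2) by simp only [q1, q2, q3, q4, q5]; ring]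
    exact add_mem (add_mem (Ideal.mul_mem_left _ _ h3) (Ideal.mul_mem_left _ _ h1))
      (Ideal.mul_mem_left _ _ hc)
  · refine mem_gradIdeal_of_mul_mem (a := X 3 + X 4) (by simpa) (h 4) ?_
    rw [show (X 3 + X 4) * q5 = X 5 * q3 + (X 0 * X 4) * q1 + X 4 * (q5 - q2) by
      simp only [q1, q2, q3, q5]; ring]
    exact add_mem (add_mem (Ideal.mul_mem_left _ _ h3) (Ideal.mul_mem_left _ _ h1))
      (Ideal.mul_mem_left _ _ hc)

/-- Outside the plane `x = v = t + u = 0`, the five Pfaffians are generated near `p` by `q₁`,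
`q₅ - q₂` and a single equation in which `w` occurs with nonzero coefficient. -/
lemma exists_pfaffian_generator (h : ∀ i, eval p (eqns24097 i) = 0)
    (hE : ¬(p 0 = 0 ∧ p 5 = 0 ∧ p 3 + p 4 = 0)) :
    ∃ k, gradAt p (eqns24097 k) 6 ≠ 0 ∧ gradAt p (eqns24097 k) 7 = 0 ∧
      ∀ S, q1 ∈ gradIdeal p S → q5 - q2 ∈ gradIdeal p S → eqns24097 k ∈ gradIdeal p S →
        q2 ∈ gradIdeal p S ∧ q3 ∈ gradIdeal p S ∧ q4 ∈ gradIdeal p S ∧ q5 ∈ gradIdeal p S := by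
  have h2 {S} (hc : q5 - q2 ∈ gradIdeal p S) (h5 : q5 ∈ gradIdeal p S) : q2 ∈ gradIdeal p S := by
    simpa using sub_mem h5 hc
  by_cases hx : p 0 = 0
  · by_cases hv : p 5 = 0
    · have htu : p 3 + p 4 ≠ 0 := fun htu => hE ⟨hx, hv, htu⟩
      refine ⟨2, ?_, ?_, fun S m1 mc m3 => ?_⟩
      · simpa [eqns24097, gradAt_q3] using htu
      · simp [eqns24097, gradAt_q3]
      · obtain ⟨m4, m5⟩ := pfaffians_mem_of_q3_mem h htu m1 mc m3
        exact ⟨h2 mc m5, m3, m4, m5⟩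
    · refine ⟨4, ?_, ?_, fun S m1 mc m5 => ?_⟩
      · simpa [eqns24097, gradAt_q5] using hv
      · simp [eqns24097, gradAt_q5]
      · obtain ⟨m3, m4⟩ := pfaffians_mem_of_q5_mem h hv m1 mc m5
        exact ⟨h2 mc m5, m3, m4, m5⟩
  · refine ⟨3, ?_, ?_, fun S m1 mc m4 => ?_⟩
    · simpa [eqns24097, gradAt_q4] using hx
    · simp [eqns24097, gradAt_q4]
    · obtain ⟨m3, m5⟩ := pfaffians_mem_of_q4_mem h hx m1 mc m4
      exact ⟨h2 mc m5, m3, m4, m5⟩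

lemma unprojection_mem_of_q6_mem (h : ∀ i, eval p (eqns24097 i) = 0)
    (ht : p 3 ≠ 0) (h1 : q1 ∈ gradIdeal p S)
    (h2 : q2 ∈ gradIdeal p S) (h3 : q3 ∈ gradIdeal p S) (h4 : q4 ∈ gradIdeal p S)
    (h6 : q6 ∈ gradIdeal p S) :
    q7 ∈ gradIdeal p S ∧ q8 ∈ gradIdeal p S ∧ q9 ∈ gradIdeal p S := by
  refine ⟨?_, ?_, ?_⟩
  · refine mem_gradIdeal_of_mul_mem (a := X 3) (by simpa) (h 6) ?_
    rw [show X 3 * q7 = (-X 4) * q6 + (-X 0) * q3 by simp only [q3, q6, q7]; ring]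
    exact add_mem (Ideal.mul_mem_left _ _ h6) (Ideal.mul_mem_left _ _ h3)
  · refine mem_gradIdeal_of_mul_mem (a := X 3) (by simpa) (h 7) ?_
    rw [show X 3 * q8 = X 5 * q6 + (-(X 0 ^ 2)) * q1 + X 0 * q2 by
      simp only [q1, q2, q6, q8]; ring]
    exact add_mem (add_mem (Ideal.mul_mem_left _ _ h6) (Ideal.mul_mem_left _ _ h1))
      (Ideal.mul_mem_left _ _ h2)
  · refine mem_gradIdeal_of_mul_mem (a := X 3) (by simpa) (h 8) ?_
    rw [show X 3 * q9 = (-X 6) * q6 + (X 0 * X 1 ^ 2 - X 0 * X 2 ^ 2 - X 4 * X 6) * q1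
      + (-(X 1 ^ 2) + X 2 ^ 2 + X 4 * X 5) * q2 + (X 1 * X 2) * q3 + (X 0 * X 5 - X 6) * q4 by
      simp only [q1, q2, q3, q4, q6, q9]; ring]
    exact add_mem (add_mem (add_mem (add_mem (Ideal.mul_mem_left _ _ h6)
      (Ideal.mul_mem_left _ _ h1)) (Ideal.mul_mem_left _ _ h2)) (Ideal.mul_mem_left _ _ h3))
      (Ideal.mul_mem_left _ _ h4)

lemma unprojection_mem_of_q7_mem (h : ∀ i, eval p (eqns24097 i) = 0)
    (hu : p 4 ≠ 0) (h1 : q1 ∈ gradIdeal p S)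
    (h2 : q2 ∈ gradIdeal p S) (h3 : q3 ∈ gradIdeal p S) (h4 : q4 ∈ gradIdeal p S)
    (h5 : q5 ∈ gradIdeal p S) (h7 : q7 ∈ gradIdeal p S) :
    q6 ∈ gradIdeal p S ∧ q8 ∈ gradIdeal p S ∧ q9 ∈ gradIdeal p S := by
  refine ⟨?_, ?_, ?_⟩
  · refine mem_gradIdeal_of_mul_mem (a := X 4) (by simpa) (h 5) ?_
    rw [show X 4 * q6 = (-X 3) * q7 + (-X 0) * q3 by simp only [q3, q6, q7]; ring]
    exact add_mem (Ideal.mul_mem_left _ _ h7) (Ideal.mul_mem_left _ _ h3)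
  · refine mem_gradIdeal_of_mul_mem (a := X 4) (by simpa) (h 7) ?_
    rw [show X 4 * q8 = (-X 5) * q7 + (-X 0) * q5 by simp only [q5, q7, q8]; ring]
    exact add_mem (Ideal.mul_mem_left _ _ h7) (Ideal.mul_mem_left _ _ h5)
  · refine mem_gradIdeal_of_mul_mem (a := X 4) (by simpa) (h 8) ?_
    rw [show X 4 * q9 = X 6 * q7 + (X 3 * X 6) * q1 + (-(X 3 * X 5)) * q2
      + (X 1 * X 2 + X 6) * q4 + (X 1 ^ 2 - X 2 ^ 2) * q5 by
      simp only [q1, q2, q4, q5, q7, q9]; ring]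
    exact add_mem (add_mem (add_mem (add_mem (Ideal.mul_mem_left _ _ h7)
      (Ideal.mul_mem_left _ _ h1)) (Ideal.mul_mem_left _ _ h2)) (Ideal.mul_mem_left _ _ h4))
      (Ideal.mul_mem_left _ _ h5)

lemma unprojection_mem_of_q8_mem (h : ∀ i, eval p (eqns24097 i) = 0)
    (hv : p 5 ≠ 0) (h1 : q1 ∈ gradIdeal p S)
    (h2 : q2 ∈ gradIdeal p S) (h4 : q4 ∈ gradIdeal p S) (h5 : q5 ∈ gradIdeal p S)
    (h8 : q8 ∈ gradIdeal p S) :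
    q6 ∈ gradIdeal p S ∧ q7 ∈ gradIdeal p S ∧ q9 ∈ gradIdeal p S := by
  refine ⟨?_, ?_, ?_⟩
  · refine mem_gradIdeal_of_mul_mem (a := X 5) (by simpa) (h 5) ?_
    rw [show X 5 * q6 = X 3 * q8 + X 0 ^ 2 * q1 + (-X 0) * q2 by
      simp only [q1, q2, q6, q8]; ring]
    exact add_mem (add_mem (Ideal.mul_mem_left _ _ h8) (Ideal.mul_mem_left _ _ h1))
      (Ideal.mul_mem_left _ _ h2)
  · refine mem_gradIdeal_of_mul_mem (a := X 5) (by simpa) (h 6) ?_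
    rw [show X 5 * q7 = (-X 4) * q8 + (-X 0) * q5 by simp only [q5, q7, q8]; ring]
    exact add_mem (Ideal.mul_mem_left _ _ h8) (Ideal.mul_mem_left _ _ h5)
  · refine mem_gradIdeal_of_mul_mem (a := X 5) (by simpa) (h 8) ?_
    rw [show X 5 * q9 = (-X 6) * q8 + (X 0 * X 3 * X 4 + X 1 ^ 2 * X 4 - X 2 ^ 2 * X 4) * q1
      + (-(X 0 * X 4) - X 3 * X 4 + X 4 ^ 2) * q2
      + (-(X 0 ^ 2) + X 0 * X 4 + X 1 ^ 2 - X 2 ^ 2) * q4 + (X 1 * X 2) * q5 by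
      simp only [q1, q2, q4, q5, q8, q9]; ring]
    exact add_mem (add_mem (add_mem (add_mem (Ideal.mul_mem_left _ _ h8)
      (Ideal.mul_mem_left _ _ h1)) (Ideal.mul_mem_left _ _ h2)) (Ideal.mul_mem_left _ _ h4))
      (Ideal.mul_mem_left _ _ h5)

/-- Outside the plane `t = u = v = 0`, the equations `q₆, …, q₉` are generated near `p` by the
Pfaffians and a single equation in which `s` occurs with nonzero coefficient. -/
lemma exists_unprojection_generator (h : ∀ i, eval p (eqns24097 i) = 0)
    (hD : ¬(p 3 = 0 ∧ p 4 = 0 ∧ p 5 = 0)) :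
    ∃ k, gradAt p (eqns24097 k) 7 ≠ 0 ∧
      ∀ S, q1 ∈ gradIdeal p S → q2 ∈ gradIdeal p S → q3 ∈ gradIdeal p S → q4 ∈ gradIdeal p S →
        q5 ∈ gradIdeal p S → eqns24097 k ∈ gradIdeal p S →
        q6 ∈ gradIdeal p S ∧ q7 ∈ gradIdeal p S ∧ q8 ∈ gradIdeal p S ∧ q9 ∈ gradIdeal p S := by
  by_cases ht : p 3 = 0
  · by_cases hu : p 4 = 0
    · have hv : p 5 ≠ 0 := fun hv => hD ⟨ht, hu, hv⟩
      refine ⟨7, ?_, fun S m1 m2 m3 m4 m5 m8 => ?_⟩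
      · simpa [eqns24097, gradAt_q8] using hv
      · obtain ⟨m6, m7, m9⟩ := unprojection_mem_of_q8_mem h hv m1 m2 m4 m5 m8
        exact ⟨m6, m7, m8, m9⟩
    · refine ⟨6, ?_, fun S m1 m2 m3 m4 m5 m7 => ?_⟩
      · simpa [eqns24097, gradAt_q7] using hu
      · obtain ⟨m6, m8, m9⟩ := unprojection_mem_of_q7_mem h hu m1 m2 m3 m4 m5 m7
        exact ⟨m6, m7, m8, m9⟩
  · refine ⟨5, ?_, fun S m1 m2 m3 m4 m5 m6 => ?_⟩
    · simpa [eqns24097, gradAt_q6] using ht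
    · obtain ⟨m7, m8, m9⟩ := unprojection_mem_of_q6_mem h ht m1 m2 m3 m4 m6
      exact ⟨m6, m7, m8, m9⟩

end GradIdeal

section Rank

variable {p : Fin 8 → ℂ}

/-- The Jacobian has rank four as soon as all equations are generated near `p` by four linear
combinations of them with linearly independent gradients. -/
lemma jacobian_rank_eq_four (h : ∀ i, eval p (eqns24097 i) = 0) {a b c d : MvPolynomial (Fin 8) ℂ}
    (ha : a ∈ Submodule.span ℂ (Set.range eqns24097))
    (hb : b ∈ Submodule.span ℂ (Set.range eqns24097))
    (hc : c ∈ Submodule.span ℂ (Set.range eqns24097))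
    (hd : d ∈ Submodule.span ℂ (Set.range eqns24097))
    (hind : ∀ α β γ δ : ℂ, α • gradAt p a + β • gradAt p b + γ • gradAt p c + δ • gradAt p d = 0 →
      α = 0 ∧ β = 0 ∧ γ = 0 ∧ δ = 0)
    (hJ : ∀ S, a ∈ gradIdeal p S → b ∈ gradIdeal p S → c ∈ gradIdeal p S → d ∈ gradIdeal p S →
      q1 ∈ gradIdeal p S ∧ q2 ∈ gradIdeal p S ∧ q3 ∈ gradIdeal p S ∧ q4 ∈ gradIdeal p S ∧
      q5 ∈ gradIdeal p S ∧ q6 ∈ gradIdeal p S ∧ q7 ∈ gradIdeal p S ∧ q8 ∈ gradIdeal p S ∧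
      q9 ∈ gradIdeal p S) :
    (Matrix.of fun (i : Fin 9) (j : Fin 8) => eval p (pderiv j (eqns24097 i))).rank = 4 := by
  have hr : (Matrix.of fun (i : Fin 9) (j : Fin 8) => eval p (pderiv j (eqns24097 i))) =
      fun i => gradAt p (eqns24097 i) := by
    ext i j
    exact (gradAt_apply p _ j).symm
  have hrow {f} (hf : f ∈ Submodule.span ℂ (Set.range eqns24097)) :
      eval p f = 0 ∧
        gradAt p f ∈ Submodule.span ℂ (Set.range fun i => gradAt p (eqns24097 i)) := by
    induction hf using Submodule.span_induction with
    | mem f hf =>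
      obtain ⟨i, rfl⟩ := hf
      exact ⟨h i, Submodule.subset_span ⟨i, rfl⟩⟩
    | zero => simp
    | add f g _ _ hf hg =>
      rw [map_add, map_add, hf.1, hg.1]
      exact ⟨add_zero 0, add_mem hf.2 hg.2⟩
    | smul k f _ hf =>
      rw [smul_eval, map_smul, hf.1]
      exact ⟨mul_zero k, Submodule.smul_mem _ k hf.2⟩
  set v : Fin 4 → Fin 8 → ℂ := ![gradAt p a, gradAt p b, gradAt p c, gradAt p d] with hv
  have hv0 : gradAt p a ∈ Submodule.span ℂ (Set.range v) := Submodule.subset_span ⟨0, rfl⟩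
  have hv1 : gradAt p b ∈ Submodule.span ℂ (Set.range v) := Submodule.subset_span ⟨1, rfl⟩
  have hv2 : gradAt p c ∈ Submodule.span ℂ (Set.range v) := Submodule.subset_span ⟨2, rfl⟩
  have hv3 : gradAt p d ∈ Submodule.span ℂ (Set.range v) := Submodule.subset_span ⟨3, rfl⟩
  obtain ⟨m1, m2, m3, m4, m5, m6, m7, m8, m9⟩ := hJ _ ⟨(hrow ha).1, hv0⟩ ⟨(hrow hb).1, hv1⟩
    ⟨(hrow hc).1, hv2⟩ ⟨(hrow hd).1, hv3⟩
  rw [hr]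
  refine rank_eq_four_of_basis (b := v) ?_ ?_ ?_
  · rw [Fintype.linearIndependent_iff]
    intro k hk
    rw [Fin.sum_univ_four] at hk
    obtain ⟨h0, h1, h2, h3⟩ := hind _ _ _ _ hk
    intro i
    fin_cases i
    exacts [h0, h1, h2, h3]
  · intro i
    fin_cases i
    exacts [(hrow ha).2, (hrow hb).2, (hrow hc).2, (hrow hd).2]
  · have hall : ∀ i, eqns24097 i ∈ gradIdeal p (Submodule.span ℂ (Set.range v)) := by
      intro i
      fin_cases i
      exacts [m1, m2, m3, m4, m5, m6, m7, m8, m9]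
    exact fun i => (hall i).2

/-- The gradients of `q₁` and `q₅ - q₂` are linearly independent outside the planes
`t = u = v = 0` and `x = v = t + u = 0`. -/
lemma pencil_independent (h : ∀ i, eval p (eqns24097 i) = 0) (hD : ¬(p 3 = 0 ∧ p 4 = 0 ∧ p 5 = 0))
    (hE : ¬(p 0 = 0 ∧ p 5 = 0 ∧ p 3 + p 4 = 0)) {α β : ℂ}
    (hαβ : α • gradAt p q1 + β • gradAt p (q5 - q2) = 0) : α = 0 ∧ β = 0 := by
  have e1 : p 0 * p 3 - p 3 * p 4 - p 4 ^ 2 + p 5 ^ 2 = 0 := by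
    simpa [eqns24097, q1] using h 0
  have c0 := congrFun hαβ 0
  have c1 := congrFun hαβ 1
  have c2 := congrFun hαβ 2
  have c3 := congrFun hαβ 3
  have c4 := congrFun hαβ 4
  have c5 := congrFun hαβ 5
  by_cases hβ : β = 0
  · subst hβ
    refine ⟨by_contra fun hα => ?_, rfl⟩
    simp [gradAt_q1, hα] at c0 c3 c4 c5
    exact hD ⟨c0, by linear_combination (-c4 - c0) / 2, c5⟩
  · exfalso
    obtain ⟨l, rfl⟩ : ∃ l, α = -(β * l) := ⟨-α / β, by field_simp⟩
    simp [gradAt_q1, gradAt_q2, gradAt_q5, hβ] at c0 c1 c2 c3 c4 c5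
    refine no_critical (x := p 0) (y := p 1) (z := p 2) (l := l) ?_ ?_ ?_ ?_ ?_ ?_ e1 hD hE
    · exact mul_left_cancel₀ hβ (by linear_combination c0)
    · linear_combination c1
    · linear_combination c2
    · exact mul_left_cancel₀ hβ (by linear_combination c3)
    · exact mul_left_cancel₀ hβ (by linear_combination c4)
    · exact mul_left_cancel₀ hβ (by linear_combination c5)

lemma jacobian_rank_of_generic (h : ∀ i, eval p (eqns24097 i) = 0)
    (hD : ¬(p 3 = 0 ∧ p 4 = 0 ∧ p 5 = 0))
    (hE : ¬(p 0 = 0 ∧ p 5 = 0 ∧ p 3 + p 4 = 0)) :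
    (Matrix.of fun (i : Fin 9) (j : Fin 8) => eval p (pderiv j (eqns24097 i))).rank = 4 := by
  obtain ⟨k, hk6, hk7, hk⟩ := exists_pfaffian_generator h hE
  obtain ⟨l, hl7, hl⟩ := exists_unprojection_generator h hD
  refine jacobian_rank_eq_four h (a := q1) (b := q5 - q2) (c := eqns24097 k) (d := eqns24097 l)
    (Submodule.subset_span ⟨0, rfl⟩) (sub_mem (Submodule.subset_span ⟨4, rfl⟩) (Submodule.subset_span ⟨1, rfl⟩))
    (Submodule.subset_span ⟨k, rfl⟩) (Submodule.subset_span ⟨l, rfl⟩) ?_ ?_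
  · intro α β γ δ hc
    have h3 : δ = 0 := by
      have := congrFun hc 7
      simp only [map_sub, Pi.add_apply, Pi.sub_apply, Pi.smul_apply] at this
      simpa [gradAt_q1, gradAt_q2, gradAt_q5, hk7, hl7] using this
    have h2 : γ = 0 := by
      have := congrFun hc 6
      simp only [map_sub, Pi.add_apply, Pi.sub_apply, Pi.smul_apply] at this
      simpa [gradAt_q1, gradAt_q2, gradAt_q5, h3, hk6] using this
    obtain ⟨h0, h1⟩ := pencil_independent h hD hE (α := α) (β := β)
      (by simpa [h2, h3] using hc)
    exact ⟨h0, h1, h2, h3⟩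
  · intro S m1 mc mk ml
    obtain ⟨m2, m3, m4, m5⟩ := hk S m1 mc mk
    exact ⟨m1, m2, m3, m4, m5, hl S m1 m2 m3 m4 m5 ml⟩

lemma jacobian_rank_of_mem_left_plane (h : ∀ i, eval p (eqns24097 i) = 0)
    (ht : p 3 ≠ 0) (hx : p 0 = 0) (hv : p 5 = 0)
    (htu : p 3 + p 4 = 0) :
    (Matrix.of fun (i : Fin 9) (j : Fin 8) => eval p (pderiv j (eqns24097 i))).rank = 4 := by
  have hu : p 4 = -p 3 := by linear_combination htu
  have e2 : p 1 ^ 2 - p 2 ^ 2 = 0 := by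
    have := h 1
    simp [eqns24097, q2, hx, hv] at this
    exact mul_left_cancel₀ ht (by linear_combination this)
  have e3 : p 1 * p 2 = -2 * p 3 ^ 2 := by
    have := h 2
    simp [eqns24097, q3, hx, hu] at this
    exact mul_left_cancel₀ ht (by linear_combination this)
  have e6 : p 7 = 0 := by
    have := h 5
    simpa [eqns24097, q6, hx, ht] using this
  have hy : p 1 ≠ 0 := by
    intro hy
    simp [hy, ht] at e3
  refine jacobian_rank_eq_four h (a := q1) (b := q2) (c := q3) (d := q6)
    (Submodule.subset_span ⟨0, rfl⟩) (Submodule.subset_span ⟨1, rfl⟩)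
    (Submodule.subset_span ⟨2, rfl⟩) (Submodule.subset_span ⟨5, rfl⟩) ?_ ?_
  · intro α β γ δ hc
    have d0 := congrFun hc 0
    have d1 := congrFun hc 1
    have d2 := congrFun hc 2
    have d7 := congrFun hc 7
    simp [gradAt_q1, gradAt_q2, gradAt_q3, gradAt_q6, hx, hv, hu, ht] at d0 d1 d2 d7
    have hy2 : p 3 * p 1 ^ 2 ≠ 0 := mul_ne_zero ht (pow_ne_zero 2 hy)
    have h1 : β = 0 := mul_left_cancel₀ hy2
      (by linear_combination (p 1 * d1 - p 2 * d2 + 2 * β * p 3 * e2) / 4)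
    have h2 : γ = 0 := mul_left_cancel₀ hy2
      (by linear_combination (p 2 * d1 + p 1 * d2 + γ * p 3 * e2) / 2)
    have h0 : α = 0 := by simpa [h1, d7, ht] using d0
    exact ⟨h0, h1, h2, d7⟩
  · intro S m1 m2 m3 m6
    have m4 : q4 ∈ gradIdeal p S := by
      refine mem_gradIdeal_of_smul_eq ht (h 3)
        (sub_mem (S.smul_mem (p 6) m1.2) (S.smul_mem (p 3) m3.2)) ?_
      ext j
      fin_cases j <;> simp [gradAt_q1, gradAt_q3, gradAt_q4, hx, hv, hu] <;> grind
    have m5 : q5 ∈ gradIdeal p S := by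
      refine mem_gradIdeal_of_smul_eq one_ne_zero (h 4) m2.2 ?_
      ext j
      fin_cases j <;> simp [gradAt_q2, gradAt_q5, hx, hv, hu] <;> grind
    exact ⟨m1, m2, m3, m4, m5, m6, unprojection_mem_of_q6_mem h ht m1 m2 m3 m4 m6⟩

lemma jacobian_rank_of_mem_right_plane (h : ∀ i, eval p (eqns24097 i) = 0)
    (hx : p 0 ≠ 0) (ht : p 3 = 0) (hu : p 4 = 0)
    (hv : p 5 = 0) :
    (Matrix.of fun (i : Fin 9) (j : Fin 8) => eval p (pderiv j (eqns24097 i))).rank = 4 := by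
  have hw : p 6 = 0 := by
    have := h 3
    simpa [eqns24097, q4, ht, hu, hv, hx] using this
  have e7 : p 1 * p 2 = 0 := by
    have := h 6
    simpa [eqns24097, q7, ht, hu, hw, hx] using this
  have e8 : p 0 ^ 2 = p 1 ^ 2 - p 2 ^ 2 := by
    have := h 7
    simp [eqns24097, q8, hu, hv] at this
    exact mul_left_cancel₀ hx (by linear_combination -this)
  refine jacobian_rank_eq_four h (a := q1) (b := q4) (c := q7) (d := q8)
    (Submodule.subset_span ⟨0, rfl⟩) (Submodule.subset_span ⟨3, rfl⟩)
    (Submodule.subset_span ⟨6, rfl⟩) (Submodule.subset_span ⟨7, rfl⟩) ?_ ?_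
  · intro α β γ δ hc
    have d0 := congrFun hc 0
    have d1 := congrFun hc 1
    have d2 := congrFun hc 2
    have d3 := congrFun hc 3
    have d6 := congrFun hc 6
    simp [gradAt_q1, gradAt_q4, gradAt_q7, gradAt_q8, ht, hu, hv, hw, hx] at d0 d1 d2 d3 d6
    have h3 : δ = 0 := by
      refine mul_left_cancel₀ (pow_ne_zero 2 hx) ?_
      linear_combination (-d0 - γ * e7 - δ * e8) / 2
    have h2 : γ = 0 := by
      refine mul_left_cancel₀ (pow_ne_zero 3 hx) ?_
      simp [h3, hx] at d1 d2
      rcases d1 with d1 | d1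
      · simp [d1]
      · rcases d2 with d2 | d2
        · simp [d2]
        · simp [d1, d2, hx] at e8
    have h1 : β = 0 := by simpa [h2, hx] using d6
    exact ⟨d3, h1, h2, h3⟩
  · intro S m1 m4 m7 m8
    have mc : q5 - q2 ∈ gradIdeal p S := by
      refine mem_gradIdeal_of_smul_eq one_ne_zero
        (by rw [map_sub, show eval p q5 = 0 from h 4, show eval p q2 = 0 from h 1, sub_zero])
        (S.smul_mem (-p 0) m1.2) ?_
      ext j
      fin_cases j <;> simp [gradAt_q1, gradAt_q2, gradAt_q5, ht, hu, hv, hw] <;> grind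
    obtain ⟨m3, m5⟩ := pfaffians_mem_of_q4_mem h hx m1 mc m4
    have m2 : q2 ∈ gradIdeal p S := by simpa using sub_mem m5 mc
    have m6 : q6 ∈ gradIdeal p S := by
      refine mem_gradIdeal_of_smul_eq hx (h 5)
        (sub_mem (S.smul_mem (p 7) m1.2) (S.smul_mem (p 0) m4.2)) ?_
      ext j
      fin_cases j <;> simp [gradAt_q1, gradAt_q4, gradAt_q6, ht, hu, hv, hw] <;> grind
    have m9 : q9 ∈ gradIdeal p S := by
      refine mem_gradIdeal_of_smul_eq hx (h 8)
        (sub_mem (S.smul_mem (-p 0 ^ 2) m8.2) (S.smul_mem (p 7) m4.2)) ?_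
      ext j
      fin_cases j <;> simp [gradAt_q4, gradAt_q8, gradAt_q9, ht, hu, hv, hw] <;> grind
    exact ⟨m1, m2, m3, m4, m5, m6, m7, m8, m9⟩

lemma jacobian_rank_of_mem_both_planes_of_w_ne_zero (h : ∀ i, eval p (eqns24097 i) = 0)
    (hw : p 6 ≠ 0) (hx : p 0 = 0) (ht : p 3 = 0)
    (hu : p 4 = 0) (hv : p 5 = 0) :
    (Matrix.of fun (i : Fin 9) (j : Fin 8) => eval p (pderiv j (eqns24097 i))).rank = 4 := by
  have e9 : p 6 * p 7 =
      (p 1 * p 2) ^ 2 - (p 1 ^ 2 - p 2 ^ 2) ^ 2 + p 1 * p 2 * p 6 := by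
    have := h 8
    simp [eqns24097, q9, hx, ht, hu] at this
    linear_combination -this
  have hw2 : p 6 ^ 2 ≠ 0 := pow_ne_zero 2 hw
  refine jacobian_rank_eq_four h (a := q2) (b := q3) (c := q4) (d := q9)
    (Submodule.subset_span ⟨1, rfl⟩) (Submodule.subset_span ⟨2, rfl⟩)
    (Submodule.subset_span ⟨3, rfl⟩) (Submodule.subset_span ⟨8, rfl⟩) ?_ ?_
  · intro α β γ δ hc
    have d0 := congrFun hc 0
    have d4 := congrFun hc 4
    have d5 := congrFun hc 5
    have d7 := congrFun hc 7
    simp [gradAt_q2, gradAt_q3, gradAt_q4, gradAt_q9, hx, ht, hu, hv, hw] at d0 d4 d5 d7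
    have h1 : β = 0 := by simpa [d0, d7, hw] using d4
    have h0 : α = 0 := by simpa [d0, d7, hw] using d5
    exact ⟨h0, h1, d0, d7⟩
  · intro S m2 m3 m4 m9
    have key {f : MvPolynomial (Fin 8) ℂ} (hf : eval p f = 0) (a b c : ℂ)
        (habc : p 6 ^ 2 • gradAt p f = a • gradAt p q2 + b • gradAt p q3 + c • gradAt p q4) :
        f ∈ gradIdeal p S :=
      mem_gradIdeal_of_smul_eq hw2 hf (add_mem (add_mem (S.smul_mem _ m2.2) (S.smul_mem _ m3.2))
        (S.smul_mem _ m4.2)) habc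
    have m1 : q1 ∈ gradIdeal p S := by
      refine key (h 0) 0 0 0 ?_
      ext j
      fin_cases j <;> simp [gradAt_q1, hx, ht, hu, hv]
    have m5 : q5 ∈ gradIdeal p S := by
      refine key (h 4) (p 6 * (p 1 * p 2 + p 6)) (-p 6 * (p 1 ^ 2 - p 2 ^ 2)) 0 ?_
      ext j
      fin_cases j <;> simp [gradAt_q2, gradAt_q3, gradAt_q4, gradAt_q5, hx, ht, hu, hv] <;> grind
    have m6 : q6 ∈ gradIdeal p S := by
      refine key (h 5) (-p 6 * (p 1 ^ 2 - p 2 ^ 2)) (p 6 * (p 1 * p 2)) (-p 6 ^ 2) ?_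
      ext j
      fin_cases j <;> simp [gradAt_q2, gradAt_q3, gradAt_q4, gradAt_q6, hx, ht, hu, hv] <;> grind
    have m7 : q7 ∈ gradIdeal p S := by
      refine key (h 6) (-(p 1 ^ 2 - p 2 ^ 2) * (p 1 * p 2 + p 6)) ((p 1 ^ 2 - p 2 ^ 2) ^ 2)
        (-p 6 * (p 1 * p 2 + p 6)) ?_
      ext j
      fin_cases j <;> simp [gradAt_q2, gradAt_q3, gradAt_q4, gradAt_q7, hx, ht, hu, hv] <;> grind
    have m8 : q8 ∈ gradIdeal p S := by
      refine key (h 7) (p 1 * p 2 * (p 1 * p 2 + p 6)) (-(p 1 ^ 2 - p 2 ^ 2) * (p 1 * p 2))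
        (p 6 * (p 1 ^ 2 - p 2 ^ 2)) ?_
      ext j
      fin_cases j <;> simp [gradAt_q2, gradAt_q3, gradAt_q4, gradAt_q8, hx, ht, hu, hv] <;> grind
    exact ⟨m1, m2, m3, m4, m5, m6, m7, m8, m9⟩

lemma jacobian_rank_of_mem_both_planes_of_s_ne_zero (h : ∀ i, eval p (eqns24097 i) = 0)
    (hs : p 7 ≠ 0) (hx : p 0 = 0) (ht : p 3 = 0)
    (hu : p 4 = 0) (hv : p 5 = 0) (hw : p 6 = 0) :
    (Matrix.of fun (i : Fin 9) (j : Fin 8) => eval p (pderiv j (eqns24097 i))).rank = 4 := by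
  have e9 : (p 1 * p 2) ^ 2 = (p 1 ^ 2 - p 2 ^ 2) ^ 2 := by
    have := h 8
    simp [eqns24097, q9, hx, ht, hu, hw] at this
    linear_combination this
  refine jacobian_rank_eq_four h (a := q6) (b := q7) (c := q8) (d := q9)
    (Submodule.subset_span ⟨5, rfl⟩) (Submodule.subset_span ⟨6, rfl⟩)
    (Submodule.subset_span ⟨7, rfl⟩) (Submodule.subset_span ⟨8, rfl⟩) ?_ ?_
  · intro α β γ δ hc
    have d1 := congrFun hc 1
    have d2 := congrFun hc 2
    have d3 := congrFun hc 3
    have d4 := congrFun hc 4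
    have d5 := congrFun hc 5
    have d6 := congrFun hc 6
    simp [gradAt_q6, gradAt_q7, gradAt_q8, gradAt_q9, hx, ht, hu, hv, hw, hs]
      at d1 d2 d3 d4 d5 d6
    have h3 : δ = 0 := by
      by_contra hδ
      have hn : p 1 * p 2 ≠ 0 := fun h0 =>
        hs (by linear_combination h0 - d6.resolve_left hδ)
      obtain ⟨hy, hz⟩ := mul_ne_zero_iff.1 hn
      have f1 : 3 * p 2 ^ 2 = 2 * p 1 ^ 2 :=
        mul_left_cancel₀ hy (by linear_combination d1.resolve_left hδ / 2)
      have f2 : 3 * p 1 ^ 2 = 2 * p 2 ^ 2 :=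
        mul_left_cancel₀ hz (by linear_combination d2.resolve_left hδ / 2)
      apply pow_ne_zero 2 hz
      linear_combination (3 * f1 + 2 * f2) / 5
    exact ⟨d3, d4, d5, h3⟩
  · intro S m6 m7 m8 m9
    have key {f : MvPolynomial (Fin 8) ℂ} (hf : eval p f = 0) (a b c : ℂ)
        (habc : p 7 • gradAt p f = a • gradAt p q6 + b • gradAt p q7 + c • gradAt p q8) :
        f ∈ gradIdeal p S :=
      mem_gradIdeal_of_smul_eq hs hf (add_mem (add_mem (S.smul_mem _ m6.2) (S.smul_mem _ m7.2))
        (S.smul_mem _ m8.2)) habc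
    have m1 : q1 ∈ gradIdeal p S := by
      refine key (h 0) 0 0 0 ?_
      ext j
      fin_cases j <;> simp [gradAt_q1, hx, ht, hu, hv]
    have m2 : q2 ∈ gradIdeal p S := by
      refine key (h 1) (p 1 ^ 2 - p 2 ^ 2) 0 0 ?_
      ext j
      fin_cases j <;> simp [gradAt_q2, gradAt_q6, hx, ht, hu, hv, hw] <;> ring
    have m3 : q3 ∈ gradIdeal p S := by
      refine key (h 2) (p 1 * p 2) 0 0 ?_
      ext j
      fin_cases j <;> simp [gradAt_q3, gradAt_q6, hx, ht, hu, hv, hw] <;> ring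
    have m4 : q4 ∈ gradIdeal p S := by
      refine key (h 3) 0 (-(p 1 * p 2)) (-(p 1 ^ 2 - p 2 ^ 2)) ?_
      ext j
      fin_cases j <;> simp [gradAt_q4, gradAt_q7, gradAt_q8, hx, ht, hu, hv, hw] <;> grind
    have m5 : q5 ∈ gradIdeal p S := by
      refine key (h 4) 0 (p 1 ^ 2 - p 2 ^ 2) (p 1 * p 2) ?_
      ext j
      fin_cases j <;> simp [gradAt_q5, gradAt_q7, gradAt_q8, hx, ht, hu, hv, hw] <;> grind
    exact ⟨m1, m2, m3, m4, m5, m6, m7, m8, m9⟩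

lemma jacobian_rank_of_mem_line (h : ∀ i, eval p (eqns24097 i) = 0)
    (hp : p ≠ 0) (hx : p 0 = 0) (ht : p 3 = 0) (hu : p 4 = 0)
    (hv : p 5 = 0) (hw : p 6 = 0) (hs : p 7 = 0) :
    (Matrix.of fun (i : Fin 9) (j : Fin 8) => eval p (pderiv j (eqns24097 i))).rank = 4 := by
  have e9 : (p 1 * p 2) ^ 2 = (p 1 ^ 2 - p 2 ^ 2) ^ 2 := by
    have := h 8
    simp [eqns24097, q9, hx, ht, hu, hw] at this
    linear_combination this
  have hn : p 1 * p 2 ≠ 0 := by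
    intro hn
    have hm : p 1 ^ 2 - p 2 ^ 2 = 0 := by simpa [hn] using e9.symm
    refine hp ?_
    rcases mul_eq_zero.1 hn with h0 | h0 <;> simp [h0] at hm <;> ext j <;> fin_cases j <;>
      assumption
  have hm : p 1 ^ 2 - p 2 ^ 2 ≠ 0 := fun hm => hn (by simpa [hm] using e9)
  refine jacobian_rank_eq_four h (a := q2) (b := q4) (c := q8) (d := q9)
    (Submodule.subset_span ⟨1, rfl⟩) (Submodule.subset_span ⟨3, rfl⟩)
    (Submodule.subset_span ⟨7, rfl⟩) (Submodule.subset_span ⟨8, rfl⟩) ?_ ?_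
  · intro α β γ δ hc
    have d0 := congrFun hc 0
    have d3 := congrFun hc 3
    have d4 := congrFun hc 4
    have d6 := congrFun hc 6
    have hyz := mul_ne_zero_iff.1 hn
    simp [gradAt_q2, gradAt_q4, gradAt_q8, gradAt_q9, hx, ht, hu, hv, hw, hs, hm, hyz]
      at d0 d3 d4 d6
    exact ⟨d3, d4, d0, d6⟩
  · intro S m2 m4 m8 m9
    have key {f : MvPolynomial (Fin 8) ℂ} (hf : eval p f = 0) (a b c : ℂ)
        (habc : (p 1 ^ 2 - p 2 ^ 2) • gradAt p f =
          a • gradAt p q2 + b • gradAt p q4 + c • gradAt p q8) :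
        f ∈ gradIdeal p S :=
      mem_gradIdeal_of_smul_eq hm hf (add_mem (add_mem (S.smul_mem _ m2.2) (S.smul_mem _ m4.2))
        (S.smul_mem _ m8.2)) habc
    have m1 : q1 ∈ gradIdeal p S := by
      refine key (h 0) 0 0 0 ?_
      ext j
      fin_cases j <;> simp [gradAt_q1, hx, ht, hu, hv]
    have m3 : q3 ∈ gradIdeal p S := by
      refine key (h 2) (p 1 * p 2) 0 0 ?_
      ext j
      fin_cases j <;> simp [gradAt_q2, gradAt_q3, hx, ht, hu, hv, hw] <;> ring
    have m5 : q5 ∈ gradIdeal p S := by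
      refine mem_gradIdeal_of_smul_eq hn (h 4) (S.smul_mem (-(p 1 ^ 2 - p 2 ^ 2)) m4.2) ?_
      ext j
      fin_cases j <;> simp [gradAt_q4, gradAt_q5, hx, ht, hu, hv, hw] <;> grind
    have m6 : q6 ∈ gradIdeal p S := by
      refine key (h 5) 0 0 0 ?_
      ext j
      fin_cases j <;> simp [gradAt_q6, hx, ht, hv, hw, hs]
    have m7 : q7 ∈ gradIdeal p S := by
      refine key (h 6) 0 0 (-(p 1 * p 2)) ?_
      ext j
      fin_cases j <;> simp [gradAt_q7, gradAt_q8, hx, ht, hu, hv, hw, hs] <;> ring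
    exact ⟨m1, m2, m3, m4, m5, m6, m7, m8, m9⟩

end Rank

/-- At every nonzero point `p ∈ ℂ⁸` where all nine polynomials vanish, the
`9×8` Jacobian matrix of the nine polynomials has rank 4.  Hence the
codimension-4 Fano 3-fold `X ⊂ ℙ(1⁶,2²)` they define is quasismooth. -/
theorem X24097_quasismooth (p : Fin 8 → ℂ) (hp : p ≠ 0)
    (h : ∀ i : Fin 9, eval p (eqns24097 i) = 0) :
    (Matrix.of fun (i : Fin 9) (j : Fin 8) =>
      eval p (pderiv j (eqns24097 i))).rank = 4 := by
  by_cases hD : p 3 = 0 ∧ p 4 = 0 ∧ p 5 = 0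
  · obtain ⟨ht, hu, hv⟩ := hD
    by_cases hx : p 0 = 0
    · by_cases hw : p 6 = 0
      · by_cases hs : p 7 = 0
        · exact jacobian_rank_of_mem_line h hp hx ht hu hv hw hs
        · exact jacobian_rank_of_mem_both_planes_of_s_ne_zero h hs hx ht hu hv hw
      · exact jacobian_rank_of_mem_both_planes_of_w_ne_zero h hw hx ht hu hv
    · exact jacobian_rank_of_mem_right_plane h hx ht hu hv
  · by_cases hE : p 0 = 0 ∧ p 5 = 0 ∧ p 3 + p 4 = 0
    · obtain ⟨hx, hv, htu⟩ := hE
      have ht : p 3 ≠ 0 := fun ht => hD ⟨ht, by simpa [ht] using htu, hv⟩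
      exact jacobian_rank_of_mem_left_plane h ht hx hv htu
    · exact jacobian_rank_of_generic h hD hE
end
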